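/- Functorial criterion for hfp maps (Grothendieck-style): let (A, I) be a Henselian pair and B an A-algebra such that (B, I·B) is a Henselian pair. Then the following are equivalent: (i) B is hfp over A with respect to I; (ii) for every nonempty directed preorder ι and every directed system (R_i)_{i ∈ ι} of A-algebras with A-algebra transition maps such that each pair (R_i, I·R_i) is Henselian, with R_∞ the direct limit of the system: (a) every A-algebra homomorphism B → R_∞ factors as the canonical map R_i → R_∞ composed with an A-algebra homomorphism B → R_i for some i, and (b) whenever g : B → R_i and h : B → R_j are A-algebra homomorphisms whose composites with the canonical maps to R_∞ agree, there exists k with i ≤ k and j ≤ k such that the composites of g and h with the transition maps to R_k agree. (Equivalently, the canonical map colim_i Hom_{A-alg}(B, R_i) → Hom_{A-alg}(B, R_∞) is bijective.) -/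

import Mathlib

universe u

/-- A ring homomorphism `ρ : R →+* H` exhibits `H` as a Henselization of the pair `(R, K)`:
`(H, K·H)` is a Henselian pair, and every map from `(R, K)` to a Henselian pair factors
uniquely through `ρ`. -/
def IsHenselization {R H : Type u} [CommRing R] [CommRing H]
    (K : Ideal R) (ρ : R →+* H) : Prop :=
  HenselianRing H (K.map ρ) ∧
    ∀ (C : Type u) [CommRing C] (J : Ideal C), HenselianRing C J →
      ∀ f : R →+* C, K.map f ≤ J → ∃! g : H →+* C, g.comp ρ = f

/-- `φ : A →+* B` is Henselian finitely presented (hfp) with respect to `I`: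
`B` is a Henselization of `(R, I·R)` for some finitely presented `A`-algebra `R`. -/
def IsHfp {A B : Type u} [CommRing A] [CommRing B] (φ : A →+* B) (I : Ideal A) : Prop :=
  ∃ (R : Type u) (_ : CommRing R) (ψ : A →+* R) (ρ : R →+* B),
    ψ.FinitePresentation ∧ ρ.comp ψ = φ ∧ IsHenselization (I.map ψ) ρ

/-- `φ : A →+* B` is h-formally étale with respect to `I`. -/
def IsHFormallyEtale {A B : Type u} [CommRing A] [CommRing B] (φ : A →+* B) (I : Ideal A) :
    Prop :=
  ∀ (E C : Type u) [CommRing E] [CommRing C] (e : A →+* E) (c : A →+* C)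
    (p : E →+* C) (u : B →+* C),
    p.comp e = c → u.comp φ = c →
    (∃ N : ℕ, 1 ≤ N ∧ Ideal.map e (I ^ N) = ⊥ ∧ Ideal.map c (I ^ N) = ⊥) →
    Function.Surjective p →
    (∃ M : ℕ, 1 ≤ M ∧ RingHom.ker p ^ M = ⊥) →
    ∃! v : B →+* E, v.comp φ = e ∧ p.comp v = u

/-- `φ : A →+* B` is h-formally smooth with respect to `I`. -/
def IsHFormallySmooth {A B : Type u} [CommRing A] [CommRing B] (φ : A →+* B) (I : Ideal A) :
    Prop :=
  ∀ (E C : Type u) [CommRing E] [CommRing C] (e : A →+* E) (c : A →+* C)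
    (p : E →+* C) (u : B →+* C),
    p.comp e = c → u.comp φ = c →
    (∃ N : ℕ, 1 ≤ N ∧ Ideal.map e (I ^ N) = ⊥ ∧ Ideal.map c (I ^ N) = ⊥) →
    Function.Surjective p →
    (∃ M : ℕ, 1 ≤ M ∧ RingHom.ker p ^ M = ⊥) →
    ∃ v : B →+* E, v.comp φ = e ∧ p.comp v = u

/-- `φ : A →+* B` is h-étale with respect to `I`: `B` is a Henselization of `(R, I·R)`
for some étale `A`-algebra `R`. -/
def IsHEtale {A B : Type u} [CommRing A] [CommRing B] (φ : A →+* B) (I : Ideal A) : Prop :=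
  ∃ (R : Type u) (_ : CommRing R) (_ : Algebra A R) (ρ : R →+* B),
    Algebra.Etale A R ∧ ρ.comp (algebraMap A R) = φ ∧
      IsHenselization (I.map (algebraMap A R)) ρ

/-- `φ : A →+* B` is h-smooth with respect to `I`: `B` is a Henselization of `(R, I·R)`
for some smooth `A`-algebra `R`. -/
def IsHSmooth {A B : Type u} [CommRing A] [CommRing B] (φ : A →+* B) (I : Ideal A) : Prop :=
  ∃ (R : Type u) (_ : CommRing R) (_ : Algebra A R) (ρ : R →+* B),
    Algebra.Smooth A R ∧ ρ.comp (algebraMap A R) = φ ∧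
      IsHenselization (I.map (algebraMap A R)) ρ

/-- A ring homomorphism is flat if it makes the target into a flat module over the source. -/
def RingHomFlat {A C : Type u} [CommRing A] [CommRing C] (f : A →+* C) : Prop :=
  letI := f.toAlgebra
  Module.Flat A C

/-- A ring homomorphism is smooth if it makes the target into a smooth algebra over the
source (smooth = formally smooth + finitely presented). -/
def RingHomSmooth {A C : Type u} [CommRing A] [CommRing C] (f : A →+* C) : Prop :=
  letI := f.toAlgebra
  Algebra.Smooth A C

/-- A ring homomorphism is étale if it makes the target into an étale algebra over the
source (étale = formally étale + finitely presented). -/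
def RingHomEtale {A C : Type u} [CommRing A] [CommRing C] (f : A →+* C) : Prop :=
  letI := f.toAlgebra
  Algebra.Etale A C


/-!
Homomorphisms from a finitely presented algebra commute with directed limits, and the same follows
for its Henselization because a directed limit of Henselian pairs is Henselian.

Conversely, `B` is the directed colimit of algebras `R_i` given by finitely many generators and
relations. Homomorphisms `B → colim R_iʰ → B` exhibit `B` as a retract of the colimit of their
Henselizations, and the functorial criterion lifts the first of them to some `R_iʰ`. So `B` is a
retract of the hfp algebra `R_iʰ`. The idempotent of `R_iʰ` cutting out `B` is given by finitely
many relations, which are defined over a finitely presented algebra with the same Henselization as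
`R_i`; dividing by them shows that `B` is hfp.

Henselizations are constructed inside the product of all Henselian algebras, as the union of the
images of the finitely presented algebras which have exactly one homomorphism to each of them.
-/

open Polynomial TensorProduct

/-! ### Simple roots in Henselian pairs -/

section SimpleRoots

variable {C : Type*} [CommRing C] {J : Ideal C}

theorem isUnit_of_sub_mem_of_le_jacobson (hJ : J ≤ Ideal.jacobson ⊥) {x y : C} (hy : IsUnit y)
    (hxy : x - y ∈ J) : IsUnit x := by
  have := isLocalHom_of_le_jacobson_bot J hJ
  refine isUnit_of_map_unit (Ideal.Quotient.mk J) x ?_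
  rw [Ideal.Quotient.eq.mpr hxy]
  exact hy.map _

theorem associated_sub_eval_sub_eval (hJ : J ≤ Ideal.jacobson ⊥) {f : C[X]} {a b : C}
    (ha : IsUnit (f.derivative.eval a)) (hab : b - a ∈ J) :
    Associated (b - a) (f.eval b - f.eval a) := by
  obtain ⟨k, hk⟩ := f.binomExpansion a (b - a)
  obtain ⟨v, hv⟩ : IsUnit (f.derivative.eval a + k * (b - a)) :=
    isUnit_of_sub_mem_of_le_jacobson hJ ha (by simpa using J.mul_mem_left k hab)
  refine ⟨v, ?_⟩
  rw [add_sub_cancel] at hk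
  rw [hv, hk]
  ring

theorem eq_of_isRoot_of_sub_mem (hJ : J ≤ Ideal.jacobson ⊥) {f : C[X]} {a b : C}
    (ha : f.IsRoot a) (hb : f.IsRoot b) (ha' : IsUnit (f.derivative.eval a)) (hab : b - a ∈ J) :
    a = b := by
  have h := associated_sub_eval_sub_eval hJ ha' hab
  rw [hb.eq_zero, ha.eq_zero, sub_zero, associated_zero_iff_eq_zero, sub_eq_zero] at h
  exact h.symm

theorem henselianRing_of_le {J' : Ideal C} (hC : HenselianRing C J) (hJ : J' ≤ J) :
    HenselianRing C J' where
  jac := hJ.trans hC.jac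
  is_henselian f hf a₀ ha₀ ha₀' := by
    have hu : IsUnit (f.derivative.eval a₀) :=
      have := isLocalHom_of_le_jacobson_bot J' (hJ.trans hC.jac)
      isUnit_of_map_unit _ _ ha₀'
    obtain ⟨a, ha, haa₀⟩ := hC.is_henselian f hf a₀ (hJ ha₀) (hu.map _)
    have h := associated_sub_eval_sub_eval hC.jac hu haa₀
    rw [ha.eq_zero, zero_sub] at h
    exact ⟨a, ha, J'.mem_of_dvd h.dvd' (J'.neg_mem ha₀)⟩

end SimpleRoots

/-! ### Homomorphisms inverted by Henselization -/

/-- A homomorphism `φ : S → T` of `A`-algebras is a *Hensel equivalence* along `I` if it induces a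
bijection on homomorphisms to every `A`-algebra which is Henselian along `I`, that is, if it becomes
an isomorphism after Henselization along `I`. -/
def IsHenselEquiv {A S T : Type u} [CommRing A] [CommRing S] [CommRing T] [Algebra A S]
    [Algebra A T] (I : Ideal A) (φ : S →ₐ[A] T) : Prop :=
  ∀ (C : Type u) [CommRing C] [Algebra A C], HenselianRing C (I.map (algebraMap A C)) →
    Function.Bijective fun g : T →ₐ[A] C ↦ g.comp φ

namespace IsHenselEquiv

section

variable {A S T U : Type u} [CommRing A] [CommRing S] [CommRing T] [CommRing U]
  [Algebra A S] [Algebra A T] [Algebra A U] {I : Ideal A} {φ : S →ₐ[A] T} {ψ : T →ₐ[A] U}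

theorem refl (I : Ideal A) : IsHenselEquiv I (AlgHom.id A S) := fun _ _ _ _ ↦
  Function.bijective_id

theorem comp (hψ : IsHenselEquiv I ψ) (hφ : IsHenselEquiv I φ) :
    IsHenselEquiv I (ψ.comp φ) := fun C _ _ hC ↦ (hφ C hC).comp (hψ C hC)

theorem of_comp (h : IsHenselEquiv I (ψ.comp φ)) (hφ : IsHenselEquiv I φ) :
    IsHenselEquiv I ψ := fun C _ _ hC ↦ ((hφ C hC).of_comp_iff' _).mp (h C hC)

theorem exists_comp_eq (hφ : IsHenselEquiv I φ) {C : Type u} [CommRing C] [Algebra A C]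
    (hC : HenselianRing C (I.map (algebraMap A C))) (g : S →ₐ[A] C) :
    ∃ g' : T →ₐ[A] C, g'.comp φ = g :=
  (hφ C hC).surjective g

theorem algHom_ext (hφ : IsHenselEquiv I φ) {C : Type u} [CommRing C] [Algebra A C]
    (hC : HenselianRing C (I.map (algebraMap A C))) {g g' : T →ₐ[A] C}
    (h : g.comp φ = g'.comp φ) : g = g' :=
  (hφ C hC).injective h

end

section Tower

variable {A R : Type u} [CommRing A] [CommRing R] [Algebra A R] {I : Ideal A}

theorem restrictScalars {S T : Type u} [CommRing S] [CommRing T] [Algebra R S] [Algebra R T]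
    [Algebra A S] [Algebra A T] [IsScalarTower A R S] [IsScalarTower A R T] {φ : S →ₐ[R] T}
    (hφ : IsHenselEquiv (I.map (algebraMap A R)) φ) :
    IsHenselEquiv I (φ.restrictScalars A) := by
  intro C _ _ hC
  constructor
  · intro g g' hgg'
    let : Algebra R C := (g.toRingHom.comp (algebraMap R T)).toAlgebra
    have : IsScalarTower A R C := .of_algebraMap_eq fun a ↦ by
      simp [RingHom.algebraMap_toAlgebra, ← IsScalarTower.algebraMap_apply]
    let gR : T →ₐ[R] C := { g with commutes' := fun _ ↦ rfl }
    let gR' : T →ₐ[R] C := { g' with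
      commutes' := fun r ↦ by
        simpa [RingHom.algebraMap_toAlgebra] using
          (DFunLike.congr_fun hgg' (algebraMap R S r)).symm }
    rw [IsScalarTower.algebraMap_eq A R C, ← Ideal.map_map] at hC
    have : gR = gR' := hφ.algHom_ext hC (AlgHom.ext fun s ↦ DFunLike.congr_fun hgg' s)
    exact AlgHom.ext fun t ↦ DFunLike.congr_fun this t
  · intro g
    let : Algebra R C := (g.toRingHom.comp (algebraMap R S)).toAlgebra
    have : IsScalarTower A R C := .of_algebraMap_eq fun a ↦ by
      simp [RingHom.algebraMap_toAlgebra, ← IsScalarTower.algebraMap_apply]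
    rw [IsScalarTower.algebraMap_eq A R C, ← Ideal.map_map] at hC
    obtain ⟨g', hg'⟩ := hφ.exists_comp_eq hC { g with commutes' := fun _ ↦ rfl }
    exact ⟨g'.restrictScalars A, AlgHom.ext fun s ↦ DFunLike.congr_fun hg' s⟩

theorem ofId_iff {S : Type u} [CommRing S] [Algebra R S] {K : Ideal R} :
    IsHenselEquiv K (Algebra.ofId R S) ↔
      ∀ (C : Type u) [CommRing C] [Algebra R C], HenselianRing C (K.map (algebraMap R C)) →
        Nonempty (S →ₐ[R] C) ∧ Subsingleton (S →ₐ[R] C) := by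
  refine ⟨fun h C _ _ hC ↦ ⟨?_, ⟨fun g g' ↦ h.algHom_ext hC (Subsingleton.elim _ _)⟩⟩, ?_⟩
  · exact ⟨(h.exists_comp_eq hC (Algebra.ofId R C)).choose⟩
  · intro h C _ _ hC
    obtain ⟨⟨g⟩, _⟩ := h C hC
    exact ⟨fun _ _ _ ↦ Subsingleton.elim _ _, fun _ ↦ ⟨g, Subsingleton.elim _ _⟩⟩

end Tower

end IsHenselEquiv

section IsHenselization

variable {A R H : Type u} [CommRing A] [CommRing R] [CommRing H] [Algebra A R] [Algebra A H]
  {I : Ideal A}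

theorem isHenselization_iff_isHenselEquiv (ρ : R →ₐ[A] H) :
    IsHenselization (I.map (algebraMap A R)) (ρ : R →+* H) ↔
      HenselianRing H (I.map (algebraMap A H)) ∧ IsHenselEquiv I ρ := by
  have hmap : (I.map (algebraMap A R)).map (ρ : R →+* H) = I.map (algebraMap A H) := by
    rw [Ideal.map_map, AlgHom.comp_algebraMap]
  rw [IsHenselization, hmap]
  refine and_congr_right fun _ ↦ ⟨fun h C _ _ hC ↦ ?_, fun h C _ J hC f hf ↦ ?_⟩
  · constructor
    · intro g g' hgg'
      obtain ⟨_, -, huniq⟩ := h C _ hC ((g : H →+* C).comp ρ) (by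
        rw [← AlgHom.comp_toRingHom, Ideal.map_map, AlgHom.comp_algebraMap])
      exact AlgHom.coe_ringHom_injective
        ((huniq _ rfl).trans (huniq _ (congrArg AlgHom.toRingHom hgg').symm).symm)
    · intro g
      obtain ⟨g', hg', -⟩ := h C _ hC (g : R →+* C) (by rw [Ideal.map_map, AlgHom.comp_algebraMap])
      refine ⟨{ g' with commutes' := fun a ↦ ?_ }, AlgHom.ext fun r ↦ RingHom.congr_fun hg' r⟩
      simpa using RingHom.congr_fun hg' (algebraMap A R a)
  · let : Algebra A C := (f.comp (algebraMap A R)).toAlgebra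
    rw [Ideal.map_map] at hf
    have hC' : HenselianRing C (I.map (algebraMap A C)) := henselianRing_of_le hC hf
    let fA : R →ₐ[A] C := { f with commutes' := fun _ ↦ rfl }
    obtain ⟨g, hg⟩ := h.exists_comp_eq hC' fA
    refine ⟨g, congrArg AlgHom.toRingHom hg, fun g' hg' ↦ ?_⟩
    let gA' : H →ₐ[A] C := { g' with
      commutes' := fun a ↦ by
        simpa [RingHom.algebraMap_toAlgebra] using RingHom.congr_fun hg' (algebraMap A R a) }
    have hgA' : gA'.comp ρ = fA := AlgHom.ext fun r ↦ RingHom.congr_fun hg' r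
    exact congrArg AlgHom.toRingHom (h.algHom_ext hC' (hgA'.trans hg.symm))

end IsHenselization

/-! ### Hensel neighbourhoods -/

/-- A *Hensel neighbourhood* of `(R, K)` is a finitely presented `R`-algebra which becomes
isomorphic to `R` after Henselization along `K`. These play the role which the étale neighbourhoods
of `V(K)` have in the usual construction of the Henselization. -/
structure IsHenselNeighborhood {R : Type u} [CommRing R] (K : Ideal R) (S : Type u) [CommRing S]
    [Algebra R S] : Prop where
  finitePresentation : Algebra.FinitePresentation R S
  isHenselEquiv : IsHenselEquiv K (Algebra.ofId R S)

section StandardEtale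

variable {R : Type*} [CommRing R]

/-- The standard étale pair whose algebra classifies the roots `x` of `f` such that
`(f x - f a) / (x - a)` and `f' x` are invertible. In a pair where `a` is an approximate simple
root of `f`, the former condition singles out the root close to `a`. -/
noncomputable def simpleRootPair (f : R[X]) (hf : f.Monic) (a : R) : StandardEtalePair R where
  f := f
  monic_f := hf
  g := derivative f * (f /ₘ (X - C a))
  cond := ⟨f /ₘ (X - C a), 0, 1, by simp⟩

variable {S : Type*} [CommRing S] [Algebra R S] {f : R[X]} {a : R}

theorem aeval_eq_sub_mul_aeval_divByMonic_add (f : R[X]) (a : R) (x : S) :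
    aeval x f =
      (x - algebraMap R S a) * aeval x (f /ₘ (X - C a)) + algebraMap R S (f.eval a) := by
  conv_lhs => rw [← modByMonic_add_div f (X - C a), modByMonic_X_sub_C_eq_C_eval]
  simp [add_comm]

theorem eval_divByMonic_X_sub_C_self (f : R[X]) (a : R) :
    (f /ₘ (X - C a)).eval a = f.derivative.eval a := by
  conv_rhs => rw [← modByMonic_add_div f (X - C a), modByMonic_X_sub_C_eq_C_eval]
  simp

theorem sub_mem_of_hasMap_simpleRootPair {hf : f.Monic} {J : Ideal S}
    (ha : algebraMap R S (f.eval a) ∈ J) {x : S} (hx : (simpleRootPair f hf a).HasMap x) :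
    x - algebraMap R S a ∈ J := by
  have hQ : IsUnit (aeval x (f /ₘ (X - C a))) := by
    have := hx.2
    rw [simpleRootPair, map_mul] at this
    exact isUnit_of_mul_isUnit_right this
  have h := aeval_eq_sub_mul_aeval_divByMonic_add f a x
  rw [show aeval x f = 0 from hx.1, eq_comm, add_eq_zero_iff_eq_neg] at h
  rw [← Ideal.mul_unit_mem_iff_mem J hQ, h]
  exact J.neg_mem ha

theorem existsUnique_hasMap_simpleRootPair {J : Ideal S} (hS : HenselianRing S J) (hf : f.Monic)
    (ha : algebraMap R S (f.eval a) ∈ J) (ha' : IsUnit (algebraMap R S (f.derivative.eval a))) :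
    ∃! x : S, (simpleRootPair f hf a).HasMap x := by
  have aeval_eq (p : R[X]) (x : S) : aeval x p = (p.map (algebraMap R S)).eval x := by simp
  have isUnit_aeval {p : R[X]} {x : S} (hp : p.eval a = f.derivative.eval a)
      (hx : x - algebraMap R S a ∈ J) : IsUnit (aeval x p) := by
    refine isUnit_of_sub_mem_of_le_jacobson hS.jac ha' (J.mem_of_dvd ?_ hx)
    rw [← hp, ← eval_map_apply, aeval_eq]
    exact sub_dvd_eval_sub _ _ _
  obtain ⟨x, hx, hxa⟩ := hS.is_henselian (f.map (algebraMap R S)) (hf.map _) (algebraMap R S a)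
    (by rwa [eval_map_apply]) (by rw [derivative_map, eval_map_apply]; exact ha'.map _)
  refine ⟨x, ⟨by simpa [simpleRootPair] using hx, ?_⟩, fun y hy ↦ ?_⟩
  · rw [simpleRootPair, map_mul]
    exact (isUnit_aeval rfl hxa).mul (isUnit_aeval (eval_divByMonic_X_sub_C_self f a) hxa)
  · have hyx : x - y ∈ J := by
      simpa using J.sub_mem hxa (sub_mem_of_hasMap_simpleRootPair ha hy)
    refine eq_of_isRoot_of_sub_mem hS.jac ?_ hx ?_ hyx
    · rw [IsRoot, ← aeval_eq]
      exact hy.1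
    · rw [derivative_map, ← aeval_eq]
      exact hy.isUnit_derivative_f

end StandardEtale

namespace IsHenselNeighborhood

variable {R S T : Type u} [CommRing R] [CommRing S] [CommRing T] [Algebra R S] [Algebra R T]
  {K : Ideal R}

theorem self (K : Ideal R) : IsHenselNeighborhood K R where
  finitePresentation := .self R
  isHenselEquiv := IsHenselEquiv.refl K

theorem trans [Algebra S T] [IsScalarTower R S T] (hS : IsHenselNeighborhood K S)
    (hT : IsHenselNeighborhood (K.map (algebraMap R S)) T) : IsHenselNeighborhood K T where
  finitePresentation :=
    have := hS.finitePresentation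
    have := hT.finitePresentation
    .trans R S T
  isHenselEquiv := by
    rw [Subsingleton.elim (Algebra.ofId R T) (((Algebra.ofId S T).restrictScalars R).comp
      (Algebra.ofId R S))]
    exact hT.isHenselEquiv.restrictScalars.comp hS.isHenselEquiv

theorem baseChange (hT : IsHenselNeighborhood K T) :
    IsHenselNeighborhood (K.map (algebraMap R S)) (S ⊗[R] T) where
  finitePresentation :=
    have := hT.finitePresentation
    inferInstance
  isHenselEquiv := IsHenselEquiv.ofId_iff.mpr fun C _ _ hC ↦ by
    let : Algebra R C := Algebra.compHom C (algebraMap R S)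
    have : IsScalarTower R S C := .of_algebraMap_eq fun _ ↦ rfl
    rw [Ideal.map_map, ← IsScalarTower.algebraMap_eq] at hC
    obtain ⟨⟨g⟩, _⟩ := IsHenselEquiv.ofId_iff.mp hT.isHenselEquiv C hC
    exact ⟨⟨Algebra.TensorProduct.lift (Algebra.ofId S C) g fun _ _ ↦ .all _ _⟩,
      ⟨fun _ _ ↦ Algebra.TensorProduct.ext (Subsingleton.elim _ _) (Subsingleton.elim _ _)⟩⟩

theorem tensorProduct (hS : IsHenselNeighborhood K S) (hT : IsHenselNeighborhood K T) :
    IsHenselNeighborhood K (S ⊗[R] T) :=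
  hS.trans hT.baseChange

theorem localizationAway {r : R}
    (hr : ∀ (C : Type u) [CommRing C] [Algebra R C], HenselianRing C (K.map (algebraMap R C)) →
      IsUnit (algebraMap R C r)) :
    IsHenselNeighborhood K (Localization.Away r) where
  finitePresentation := IsLocalization.Away.finitePresentation r
  isHenselEquiv := IsHenselEquiv.ofId_iff.mpr fun C _ _ hC ↦
    ⟨⟨IsLocalization.Away.liftAlgHom r (f := Algebra.ofId R C) (hr C hC)⟩,
      IsLocalization.algHom_subsingleton (.powers r)⟩

theorem simpleRootPair_ring {f : R[X]} (hf : f.Monic) {a : R}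
    (ha : ∀ (C : Type u) [CommRing C] [Algebra R C], HenselianRing C (K.map (algebraMap R C)) →
      algebraMap R C (f.eval a) ∈ K.map (algebraMap R C))
    (ha' : ∀ (C : Type u) [CommRing C] [Algebra R C], HenselianRing C (K.map (algebraMap R C)) →
      IsUnit (algebraMap R C (f.derivative.eval a))) :
    IsHenselNeighborhood K (simpleRootPair f hf a).Ring where
  finitePresentation := inferInstance
  isHenselEquiv := IsHenselEquiv.ofId_iff.mpr fun C _ _ hC ↦ by
    obtain ⟨x, hx, huniq⟩ := existsUnique_hasMap_simpleRootPair hC hf (ha C hC) (ha' C hC)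
    exact ⟨⟨StandardEtalePair.lift _ x hx⟩, ⟨fun g g' ↦ StandardEtalePair.hom_ext
      ((huniq _ (StandardEtalePair.hasMap_X.map g)).trans
        (huniq _ (StandardEtalePair.hasMap_X.map g')).symm)⟩⟩

theorem of_algEquiv (hS : IsHenselNeighborhood K S) (e : S ≃ₐ[R] T) :
    IsHenselNeighborhood K T where
  finitePresentation :=
    have := hS.finitePresentation
    .equiv e
  isHenselEquiv := IsHenselEquiv.ofId_iff.mpr fun C _ _ hC ↦ by
    obtain ⟨⟨g⟩, _⟩ := IsHenselEquiv.ofId_iff.mp hS.isHenselEquiv C hC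
    exact ⟨⟨g.comp e.symm⟩, (e.arrowCongr (.refl : C ≃ₐ[R] C)).symm.subsingleton⟩

end IsHenselNeighborhood

/-! ### Existence of the Henselization -/

section Henselization

variable {R : Type u} [CommRing R] {K : Ideal R}

/-- The `R`-algebras, in the universe of `R`, which are Henselian along `K`. -/
structure HenselianAlgebra (K : Ideal R) : Type (u + 1) where
  carrier : Type u
  [commRing : CommRing carrier]
  [algebra : Algebra R carrier]
  henselian : HenselianRing carrier (K.map (algebraMap R carrier))

attribute [instance] HenselianAlgebra.commRing HenselianAlgebra.algebra

theorem IsHenselNeighborhood.nonempty_algHom_pi {S : Type u} [CommRing S] [Algebra R S]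
    (hS : IsHenselNeighborhood K S) : Nonempty (S →ₐ[R] ∀ X : HenselianAlgebra K, X.carrier) :=
  have h (X : HenselianAlgebra K) :=
    (IsHenselEquiv.ofId_iff.mp hS.isHenselEquiv X.carrier X.henselian).1
  ⟨AlgHom.pi fun X ↦ (h X).some⟩

theorem IsHenselNeighborhood.subsingleton_algHom_pi {S : Type u} [CommRing S] [Algebra R S]
    (hS : IsHenselNeighborhood K S) :
    Subsingleton (S →ₐ[R] ∀ X : HenselianAlgebra K, X.carrier) := by
  refine ⟨fun g g' ↦ AlgHom.ext fun s ↦ funext fun X ↦ ?_⟩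
  have := (IsHenselEquiv.ofId_iff.mp hS.isHenselEquiv X.carrier X.henselian).2
  exact DFunLike.congr_fun
    (Subsingleton.elim ((Pi.evalAlgHom R _ X).comp g) ((Pi.evalAlgHom R _ X).comp g')) s

/-- The elements of the product of all Henselian algebras along `K` which come from a Hensel
neighbourhood. As a Hensel neighbourhood has exactly one homomorphism to each of the factors, this
is the filtered union of the images of all Hensel neighbourhoods. -/
def henselizationSubalgebra (K : Ideal R) :
    Subalgebra R (∀ X : HenselianAlgebra K, X.carrier) where
  carrier := {x | ∃ (S : Type u) (_ : CommRing S) (_ : Algebra R S)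
    (g : S →ₐ[R] ∀ X : HenselianAlgebra K, X.carrier), IsHenselNeighborhood K S ∧ x ∈ g.range}
  mul_mem' := by
    rintro x y ⟨S, _, _, g, hS, hx⟩ ⟨T, _, _, h, hT, hy⟩
    refine ⟨S ⊗[R] T, _, _, Algebra.TensorProduct.productMap g h, hS.tensorProduct hT, ?_⟩
    rw [Algebra.TensorProduct.productMap_range]
    exact mul_mem (SetLike.le_def.mp le_sup_left hx) (SetLike.le_def.mp le_sup_right hy)
  add_mem' := by
    rintro x y ⟨S, _, _, g, hS, hx⟩ ⟨T, _, _, h, hT, hy⟩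
    refine ⟨S ⊗[R] T, _, _, Algebra.TensorProduct.productMap g h, hS.tensorProduct hT, ?_⟩
    rw [Algebra.TensorProduct.productMap_range]
    exact add_mem (SetLike.le_def.mp le_sup_left hx) (SetLike.le_def.mp le_sup_right hy)
  algebraMap_mem' r := ⟨R, _, _, Algebra.ofId R _, .self K, r, rfl⟩

theorem IsHenselNeighborhood.exists_mvPolynomial_quotient {S : Type u} [CommRing S] [Algebra R S]
    (hS : IsHenselNeighborhood K S) :
    ∃ (n : ℕ) (𝔞 : Ideal (MvPolynomial (Fin n) R)),
      IsHenselNeighborhood K (MvPolynomial (Fin n) R ⧸ 𝔞) ∧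
        Nonempty ((MvPolynomial (Fin n) R ⧸ 𝔞) ≃ₐ[R] S) := by
  obtain ⟨n, f, hf, -⟩ := hS.finitePresentation
  let e := Ideal.quotientKerAlgEquivOfSurjective hf
  exact ⟨n, _, hS.of_algEquiv e.symm, ⟨e⟩⟩

-- An element is determined by a presentation of a neighbourhood and a class in the quotient.
instance small_henselizationSubalgebra (K : Ideal R) : Small.{u} (henselizationSubalgebra K) := by
  have h (x : henselizationSubalgebra K) :
      ∃ d : Σ (n : ℕ) (𝔞 : Ideal (MvPolynomial (Fin n) R)), MvPolynomial (Fin n) R ⧸ 𝔞,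
        IsHenselNeighborhood K (MvPolynomial (Fin d.1) R ⧸ d.2.1) ∧
          ∃ g : (MvPolynomial (Fin d.1) R ⧸ d.2.1) →ₐ[R] ∀ X : HenselianAlgebra K, X.carrier,
            g d.2.2 = x := by
    obtain ⟨x, S, _, _, g, hS, s, rfl⟩ := x
    obtain ⟨n, 𝔞, h𝔞, ⟨e⟩⟩ := hS.exists_mvPolynomial_quotient
    exact ⟨⟨n, 𝔞, e.symm s⟩, h𝔞, g.comp e, by simp⟩
  choose d hd g hg using h
  refine small_of_injective (f := d) fun x y hxy ↦ Subtype.ext ?_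
  have := (hd x).subsingleton_algHom_pi
  rw [← hg x, ← hg y]
  generalize g x = gx at *
  generalize g y = gy at *
  generalize d y = dy at *
  subst hxy
  rw [Subsingleton.elim gx gy]

/-- The Henselization of `(R, K)`, in the universe of `R`. -/
def Henselization (K : Ideal R) : Type u :=
  Shrink.{u} (henselizationSubalgebra K)

namespace Henselization

noncomputable instance : CommRing (Henselization K) :=
  inferInstanceAs (CommRing (Shrink.{u} (henselizationSubalgebra K)))

section Algebra

variable {A : Type*} [CommRing A] [Algebra A R]

noncomputable instance : Algebra A (Henselization K) :=
  (((Shrink.algEquiv R (henselizationSubalgebra K)).symm : _ →+* Shrink _).comp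
    ((algebraMap R (henselizationSubalgebra K)).comp (algebraMap A R))).toAlgebra

instance : IsScalarTower A R (Henselization K) := .of_algebraMap_eq fun _ ↦ rfl

end Algebra

/-- The Henselization is isomorphic to `henselizationSubalgebra K`, which lives in a larger
universe. -/
noncomputable def equivSubalgebra : Henselization K ≃ₐ[R] henselizationSubalgebra K :=
  { Shrink.ringEquiv (henselizationSubalgebra K) with
    commutes' := fun r ↦ (Shrink.algEquiv R (henselizationSubalgebra K)).commutes r }

/-- The inclusion of the Henselization into the product of all Henselian algebras along `K`. -/
noncomputable def toPi : Henselization K →ₐ[R] ∀ X : HenselianAlgebra K, X.carrier :=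
  (henselizationSubalgebra K).val.comp equivSubalgebra.toAlgHom

theorem toPi_injective : Function.Injective (toPi (K := K)) :=
  Subtype.val_injective.comp equivSubalgebra.injective

section Neighborhood

variable {S : Type u} [CommRing S] [Algebra R S] (hS : IsHenselNeighborhood K S)

include hS

theorem nonempty_algHom : Nonempty (S →ₐ[R] Henselization K) := by
  obtain ⟨g⟩ := hS.nonempty_algHom_pi
  exact ⟨equivSubalgebra.symm.toAlgHom.comp
    (g.codRestrict (henselizationSubalgebra K) fun s ↦ ⟨S, _, _, g, hS, s, rfl⟩)⟩

theorem subsingleton_algHom : Subsingleton (S →ₐ[R] Henselization K) where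
  allEq g h := by
    have := hS.subsingleton_algHom_pi
    rw [← AlgHom.cancel_left toPi_injective]
    exact Subsingleton.elim _ _

end Neighborhood

theorem exists_neighborhood {t : Set (Henselization K)} (ht : t.Finite) :
    ∃ (S : Type u) (_ : CommRing S) (_ : Algebra R S) (g : S →ₐ[R] Henselization K),
      IsHenselNeighborhood K S ∧ t ⊆ g.range := by
  induction t, ht using Set.Finite.induction_on with
  | empty => exact ⟨R, _, _, Algebra.ofId R _, .self K, Set.empty_subset _⟩
  | @insert x t _ _ ih =>
    obtain ⟨S, _, _, g, hS, ht⟩ := ih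
    obtain ⟨T, _, _, h, hT, y, hy⟩ := (equivSubalgebra x).2
    obtain ⟨k⟩ := nonempty_algHom hT
    have hky : k y = x := by
      have := hT.subsingleton_algHom_pi
      apply toPi_injective
      rw [← AlgHom.comp_apply, Subsingleton.elim (toPi.comp k) h]
      exact hy
    refine ⟨S ⊗[R] T, _, _, Algebra.TensorProduct.productMap g k, hS.tensorProduct hT, ?_⟩
    rw [Algebra.TensorProduct.productMap_range, Set.insert_subset_iff]
    exact ⟨SetLike.le_def.mp le_sup_right ⟨y, hky⟩, ht.trans (SetLike.le_def.mp le_sup_left)⟩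

theorem isHenselEquiv_ofId (K : Ideal R) :
    IsHenselEquiv K (Algebra.ofId R (Henselization K)) :=
  IsHenselEquiv.ofId_iff.mpr fun C _ _ hC ↦ by
    refine ⟨⟨(Pi.evalAlgHom R _ ⟨C, hC⟩).comp toPi⟩, ⟨fun e e' ↦ AlgHom.ext fun x ↦ ?_⟩⟩
    obtain ⟨S, _, _, g, hS, hx⟩ := exists_neighborhood (Set.finite_singleton x)
    obtain ⟨s, rfl⟩ := Set.singleton_subset_iff.mp hx
    have := (IsHenselEquiv.ofId_iff.mp hS.isHenselEquiv C hC).2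
    exact DFunLike.congr_fun (Subsingleton.elim (e.comp g) (e'.comp g)) s

section Extension

variable {S T : Type u} [CommRing S] [CommRing T] [Algebra R S] [Algebra S T]
  (hS : IsHenselNeighborhood K S) (g : S →ₐ[R] Henselization K)

include hS

theorem exists_ringHom_comp_eq_algebraMap
    (hT : HenselianRing T ((K.map (algebraMap R S)).map (algebraMap S T))) :
    ∃ e : Henselization K →+* T, e.comp g = algebraMap S T := by
  let : Algebra R T := Algebra.compHom T (algebraMap R S)
  have : IsScalarTower R S T := .of_algebraMap_eq fun _ ↦ rfl
  rw [Ideal.map_map, ← IsScalarTower.algebraMap_eq] at hT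
  obtain ⟨⟨e⟩, -⟩ := IsHenselEquiv.ofId_iff.mp (isHenselEquiv_ofId K) T hT
  have := (IsHenselEquiv.ofId_iff.mp hS.isHenselEquiv T hT).2
  exact ⟨e, congrArg AlgHom.toRingHom
    (Subsingleton.elim (e.comp g) (IsScalarTower.toAlgHom R S T))⟩

theorem exists_ringHom_comp_algebraMap_eq
    (hT : IsHenselNeighborhood (K.map (algebraMap R S)) T) :
    ∃ h : T →+* Henselization K, h.comp (algebraMap S T) = g := by
  let : Algebra R T := Algebra.compHom T (algebraMap R S)
  have : IsScalarTower R S T := .of_algebraMap_eq fun _ ↦ rfl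
  obtain ⟨h⟩ := nonempty_algHom (hS.trans hT)
  have := subsingleton_algHom hS
  exact ⟨h, congrArg AlgHom.toRingHom
    (Subsingleton.elim (h.comp (IsScalarTower.toAlgHom R S T)) g)⟩

end Extension

theorem isUnit_of_forall_isUnit_map {z : Henselization K}
    (hz : ∀ (C : Type u) [CommRing C] (e : Henselization K →+* C),
      HenselianRing C (K.map (e.comp (algebraMap R (Henselization K)))) → IsUnit (e z)) :
    IsUnit z := by
  obtain ⟨S, _, _, g, hS, hx⟩ := exists_neighborhood (Set.finite_singleton z)
  obtain ⟨s, rfl⟩ := Set.singleton_subset_iff.mp hx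
  have hT : IsHenselNeighborhood (K.map (algebraMap R S)) (Localization.Away s) :=
    .localizationAway fun C _ _ hC ↦ by
      obtain ⟨e, he⟩ := exists_ringHom_comp_eq_algebraMap hS g hC
      rw [Ideal.map_map, ← he, RingHom.comp_assoc, AlgHom.comp_algebraMap] at hC
      simpa [← he] using hz C e hC
  obtain ⟨h, hh⟩ := exists_ringHom_comp_algebraMap_eq hS g hT
  have hs : g s = h (algebraMap S _ s) := (RingHom.congr_fun hh s).symm
  exact hs ▸ (IsLocalization.Away.algebraMap_isUnit s).map h

theorem map_le_jacobson (K : Ideal R) :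
    K.map (algebraMap R (Henselization K)) ≤ Ideal.jacobson ⊥ := by
  intro x hx
  rw [Ideal.mem_jacobson_bot]
  refine fun y ↦ isUnit_of_forall_isUnit_map fun C _ e hC ↦ ?_
  have hex : e x ∈ K.map (e.comp (algebraMap R (Henselization K))) := by
    rw [← Ideal.map_map]
    exact Ideal.mem_map_of_mem e hx
  simpa using Ideal.mem_jacobson_bot.mp (hC.jac hex) (e y)

theorem exists_isRoot_of_isUnit {f : (Henselization K)[X]} (hf : f.Monic) {a : Henselization K}
    (ha : f.eval a ∈ K.map (algebraMap R (Henselization K)))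
    (ha' : IsUnit (f.derivative.eval a)) :
    ∃ b, f.IsRoot b ∧ b - a ∈ K.map (algebraMap R (Henselization K)) := by
  obtain ⟨S, _, _, g, hS, hg⟩ := exists_neighborhood (f.coeffs.finite_toSet.insert a)
  obtain ⟨⟨a, (rfl : g a = _)⟩, hcoeffs⟩ := Set.insert_subset_iff.mp hg
  obtain ⟨f, rfl, -, hf⟩ := lifts_and_natDegree_eq_and_monic
    ((lifts_iff_coeffs_subset_range (f := (g : S →+* Henselization K)) f).mpr hcoeffs) hf
  have eval_g (p : S[X]) : (p.map (g : S →+* Henselization K)).eval (g a) = g (p.eval a) :=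
    eval_map_apply _ _
  rw [derivative_map] at ha'
  rw [eval_g] at ha ha'
  have hT : IsHenselNeighborhood (K.map (algebraMap R S)) (simpleRootPair f hf a).Ring := by
    refine .simpleRootPair_ring hf (fun C _ _ hC ↦ ?_) fun C _ _ hC ↦ ?_ <;>
      obtain ⟨e, he⟩ := exists_ringHom_comp_eq_algebraMap hS g hC
    · rw [Ideal.map_map, ← he, RingHom.comp_assoc, AlgHom.comp_algebraMap, ← Ideal.map_map]
      exact Ideal.mem_map_of_mem e ha
    · rw [← he]
      exact ha'.map e
  obtain ⟨h, hh⟩ := exists_ringHom_comp_algebraMap_eq hS g hT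
  let : Algebra S (Henselization K) := g.toRingHom.toAlgebra
  let hAlg : (simpleRootPair f hf a).Ring →ₐ[S] Henselization K :=
    { h with commutes' := RingHom.congr_fun hh }
  have hroot := StandardEtalePair.hasMap_X.map hAlg
  refine ⟨_, ?_, sub_mem_of_hasMap_simpleRootPair ha hroot⟩
  rw [IsRoot, eval_map]
  exact hroot.1

theorem henselianRing (K : Ideal R) :
    HenselianRing (Henselization K) (K.map (algebraMap R (Henselization K))) where
  jac := map_le_jacobson K
  is_henselian _ hf _ ha ha' :=
    have := isLocalHom_of_le_jacobson_bot _ (map_le_jacobson K)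
    exists_isRoot_of_isUnit hf ha (isUnit_of_map_unit _ _ ha')

section Tower

variable {A : Type u} [CommRing A] [Algebra A R] (I : Ideal A)

theorem henselianRing_map_algebraMap : HenselianRing (Henselization (I.map (algebraMap A R)))
    (I.map (algebraMap A (Henselization (I.map (algebraMap A R))))) := by
  rw [IsScalarTower.algebraMap_eq A R (Henselization (I.map (algebraMap A R))), ← Ideal.map_map]
  exact henselianRing _

theorem isHenselEquiv_toAlgHom :
    IsHenselEquiv I (IsScalarTower.toAlgHom A R (Henselization (I.map (algebraMap A R)))) :=
  (isHenselEquiv_ofId (I.map (algebraMap A R))).restrictScalars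

end Tower

end Henselization

end Henselization

/-! ### Retracts of Henselian finitely presented algebras -/

section Hfp

variable {A R H B : Type u} [CommRing A] [CommRing R] [CommRing H] [CommRing B] [Algebra A R]
  [Algebra A H] [Algebra A B] {I : Ideal A}

theorem isHfp_algebraMap_iff :
    IsHfp (algebraMap A B) I ↔ HenselianRing B (I.map (algebraMap A B)) ∧
      ∃ (R : Type u) (_ : CommRing R) (_ : Algebra A R) (ρ : R →ₐ[A] B),
        Algebra.FinitePresentation A R ∧ IsHenselEquiv I ρ := by
  constructor
  · rintro ⟨R, _, ψ, ρ, hψ, hρ, h⟩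
    let : Algebra A R := ψ.toAlgebra
    let ρA : R →ₐ[A] B := { ρ with commutes' := RingHom.congr_fun hρ }
    obtain ⟨hB, hρA⟩ := (isHenselization_iff_isHenselEquiv ρA).mp h
    exact ⟨hB, R, _, _, ρA, hψ, hρA⟩
  · rintro ⟨hB, R, _, _, ρ, hR, hρ⟩
    exact ⟨R, _, algebraMap A R, ρ, RingHom.finitePresentation_algebraMap.mpr hR,
      ρ.comp_algebraMap, (isHenselization_iff_isHenselEquiv ρ).mpr ⟨hB, hρ⟩⟩

theorem IsHenselEquiv.exists_finitePresentation_of_finite [Algebra.FinitePresentation A R]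
    {ρ : R →ₐ[A] H} (hρ : IsHenselEquiv I ρ) (hH : HenselianRing H (I.map (algebraMap A H)))
    {t : Set H} (ht : t.Finite) :
    ∃ (S : Type u) (_ : CommRing S) (_ : Algebra A S) (φ : R →ₐ[A] S) (σ : S →ₐ[A] H),
      Algebra.FinitePresentation A S ∧ IsHenselEquiv I φ ∧ σ.comp φ = ρ ∧ t ⊆ σ.range := by
  let ρ' := IsScalarTower.toAlgHom A R (Henselization (I.map (algebraMap A R)))
  obtain ⟨e, he⟩ := hρ.exists_comp_eq (Henselization.henselianRing_map_algebraMap I) ρ'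
  obtain ⟨e', he'⟩ := (Henselization.isHenselEquiv_toAlgHom I).exists_comp_eq hH ρ
  have hee' : e'.comp e = AlgHom.id A H :=
    hρ.algHom_ext hH (by rw [AlgHom.comp_assoc, he, he', AlgHom.id_comp])
  obtain ⟨S, _, _, g, hS, ht⟩ := Henselization.exists_neighborhood (ht.image e)
  let : Algebra A S := Algebra.compHom S (algebraMap A R)
  have : IsScalarTower A R S := .of_algebraMap_eq fun _ ↦ rfl
  have := hS.finitePresentation
  refine ⟨S, _, _, IsScalarTower.toAlgHom A R S, e'.comp (g.restrictScalars A), .trans A R S,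
    hS.isHenselEquiv.restrictScalars, ?_, fun x hx ↦ ?_⟩
  · rw [← he']
    ext r
    simp
  · obtain ⟨s, hs⟩ := ht ⟨x, hx, rfl⟩
    exact ⟨s, (congrArg e' hs).trans (DFunLike.congr_fun hee' x)⟩

theorem IsHenselEquiv.quotient_liftₐ {S : Type u} [CommRing S] [Algebra A S] {σ : S →ₐ[A] H}
    (hσ : IsHenselEquiv I σ) {π : H →ₐ[A] B} {s : B →ₐ[A] H} (hπs : π.comp s = AlgHom.id A B)
    {𝔟 : Ideal S} (h𝔟 : ∀ x ∈ 𝔟, π.comp σ x = 0)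
    (hs : ∀ (C : Type u) [CommRing C] [Algebra A C], HenselianRing C (I.map (algebraMap A C)) →
      ∀ q : H →ₐ[A] C, (∀ x ∈ 𝔟, q (σ x) = 0) → (q.comp s).comp π = q) :
    IsHenselEquiv I (Ideal.Quotient.liftₐ 𝔟 (π.comp σ) h𝔟) := by
  intro C _ _ hC
  have hlift : (Ideal.Quotient.liftₐ 𝔟 (π.comp σ) h𝔟).comp (Ideal.Quotient.mkₐ A 𝔟) = π.comp σ :=
    Ideal.Quotient.liftₐ_comp ..
  constructor
  · intro k k' hkk'
    have hπσ : (k.comp π).comp σ = (k'.comp π).comp σ := by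
      rw [AlgHom.comp_assoc, AlgHom.comp_assoc, ← hlift]
      exact congrArg (AlgHom.comp · (Ideal.Quotient.mkₐ A 𝔟)) hkk'
    have hπ := congrArg (AlgHom.comp · s) (hσ.algHom_ext hC hπσ)
    simpa only [AlgHom.comp_assoc, hπs, AlgHom.comp_id] using hπ
  · intro g
    obtain ⟨q, hq⟩ := hσ.exists_comp_eq hC (g.comp (Ideal.Quotient.mkₐ A 𝔟))
    have hq𝔟 : ∀ x ∈ 𝔟, q (σ x) = 0 := fun x hx ↦ by
      rw [← AlgHom.comp_apply, hq, AlgHom.comp_apply, Ideal.Quotient.mkₐ_eq_mk,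
        Ideal.Quotient.eq_zero_iff_mem.mpr hx, map_zero]
    refine ⟨q.comp s, Ideal.Quotient.algHom_ext A ?_⟩
    rw [AlgHom.comp_assoc, hlift, ← AlgHom.comp_assoc, hs C hC q hq𝔟, hq]

-- The idempotent `s ∘ π` of `H` fixes `H` on a quotient as soon as it fixes there the images of
-- generators of `R`, and these finitely many relations descend to a finitely presented `S`.
theorem IsHfp.of_retract (hH : IsHfp (algebraMap A H) I)
    (hB : HenselianRing B (I.map (algebraMap A B))) (π : H →ₐ[A] B) (s : B →ₐ[A] H)
    (hπs : π.comp s = AlgHom.id A B) : IsHfp (algebraMap A B) I := by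
  obtain ⟨hH, R, _, _, ρ, hR, hρ⟩ := isHfp_algebraMap_iff.mp hH
  obtain ⟨t, ht⟩ := (inferInstance : Algebra.FiniteType A R)
  obtain ⟨S, _, _, φ, σ, hS, hφ, hσφ, ht'⟩ := hρ.exists_finitePresentation_of_finite hH
    (t.finite_toSet.image ((s.comp π).comp ρ))
  replace hσφ (r : R) : σ (φ r) = ρ r := DFunLike.congr_fun hσφ r
  have hy (x : t) : ∃ y, σ y = s (π (ρ x)) := ht' ⟨x, x.2, rfl⟩
  choose y hy using hy
  let 𝔟 : Ideal S := Ideal.span (Set.range fun x : t ↦ φ x - y x)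
  have h𝔟 : ∀ z ∈ 𝔟, π.comp σ z = 0 := by
    suffices 𝔟 ≤ RingHom.ker (π.comp σ) from this
    rw [Ideal.span_le]
    rintro _ ⟨x, rfl⟩
    have hπsx : π (s (π (ρ x))) = π (ρ x) := DFunLike.congr_fun hπs _
    simp [hσφ, hy, hπsx]
  have hσ : IsHenselEquiv I σ := .of_comp (φ := φ) ((AlgHom.ext hσφ : σ.comp φ = ρ) ▸ hρ) hφ
  refine isHfp_algebraMap_iff.mpr ⟨hB, S ⧸ 𝔟, _, _, _,
    .quotient (Submodule.fg_span (Set.finite_range _)),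
    hσ.quotient_liftₐ hπs h𝔟 fun C _ _ hC q hq ↦ hρ.algHom_ext hC ?_⟩
  refine AlgHom.ext_of_adjoin_eq_top ht fun x hx ↦ ?_
  have := hq _ (Ideal.subset_span ⟨⟨x, hx⟩, rfl⟩)
  rw [map_sub, map_sub, hσφ, hy, sub_eq_zero] at this
  exact this.symm

end Hfp

/-! ### Direct limits of algebras -/

theorem algHom_apply_mem_map_algebraMap {A S T : Type*} [CommRing A] [CommRing S] [CommRing T]
    [Algebra A S] [Algebra A T] (φ : S →ₐ[A] T) {I : Ideal A} {x : S}
    (hx : x ∈ I.map (algebraMap A S)) :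
    φ x ∈ I.map (algebraMap A T) := by
  rw [← φ.comp_algebraMap, ← Ideal.map_map]
  exact Ideal.mem_map_of_mem _ hx

section AlgDirectLimit

open CategoryTheory Limits

variable {A ι : Type u} [CommRing A] [Preorder ι] {G : ι → Type u} [∀ i, CommRing (G i)]
  [∀ i, Algebra A (G i)] (f : ∀ i j, i ≤ j → G i →ₐ[A] G j)

/-- The direct limit of a system of `A`-algebras, as a ring. For a nonempty directed system it is
an `A`-algebra. -/
abbrev AlgDirectLimit : Type u :=
  Ring.DirectLimit G fun i j h ↦ (f i j h : G i → G j)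

namespace AlgDirectLimit

variable [IsDirectedOrder ι]

theorem of_algebraMap (i j : ι) (a : A) :
    Ring.DirectLimit.of G (fun i j h ↦ (f i j h : G i → G j)) i (algebraMap A (G i) a) =
      Ring.DirectLimit.of G (fun i j h ↦ (f i j h : G i → G j)) j (algebraMap A (G j) a) := by
  obtain ⟨k, hik, hjk⟩ := exists_ge_ge i j
  rw [← Ring.DirectLimit.of_f hik, ← Ring.DirectLimit.of_f hjk, AlgHom.commutes, AlgHom.commutes]

variable [Nonempty ι]

noncomputable instance : Algebra A (AlgDirectLimit f) :=
  ((Ring.DirectLimit.of G (fun i j h ↦ (f i j h : G i → G j)) (Classical.arbitrary ι)).comp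
    (algebraMap A _)).toAlgebra

/-- The canonical homomorphism `Ring.DirectLimit.of` as a homomorphism of algebras. -/
noncomputable def of (i : ι) : G i →ₐ[A] AlgDirectLimit f :=
  { Ring.DirectLimit.of G (fun i j h ↦ (f i j h : G i → G j)) i with
    commutes' := of_algebraMap f i _ }

theorem of_map {i j : ι} (hij : i ≤ j) (x : G i) : of f j (f i j hij x) = of f i x :=
  Ring.DirectLimit.of_f hij x

theorem of_comp {i j : ι} (hij : i ≤ j) : (of f j).comp (f i j hij) = of f i :=
  AlgHom.ext (of_map f hij)

variable {f} {P : Type*} [CommRing P] [Algebra A P]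

/-- The homomorphism of algebras out of the direct limit induced by a compatible family of
homomorphisms. -/
noncomputable def lift (g : ∀ i, G i →ₐ[A] P)
    (hg : ∀ i j (hij : i ≤ j), (g j).comp (f i j hij) = g i) : AlgDirectLimit f →ₐ[A] P :=
  { Ring.DirectLimit.lift G (fun i j h ↦ (f i j h : G i → G j)) P (fun i ↦ g i)
      fun i j hij ↦ DFunLike.congr_fun (hg i j hij) with
    commutes' := fun a ↦
      (Ring.DirectLimit.lift_of (f := fun i j h ↦ (f i j h : G i → G j)) P (fun i ↦ g i)
        (fun i j hij ↦ DFunLike.congr_fun (hg i j hij)) _ _).trans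
      ((g (Classical.arbitrary ι)).commutes a) }

theorem lift_comp_of (g : ∀ i, G i →ₐ[A] P)
    (hg : ∀ i j (hij : i ≤ j), (g j).comp (f i j hij) = g i) (i : ι) :
    (lift g hg).comp (of f i) = g i :=
  AlgHom.ext <| Ring.DirectLimit.lift_of (f := fun i j h ↦ (f i j h : G i → G j)) P (fun i ↦ g i)
    (fun i j hij ↦ DFunLike.congr_fun (hg i j hij)) i

theorem exists_subset_range_of {t : Set (AlgDirectLimit f)} (ht : t.Finite) :
    ∃ i, t ⊆ (of f i).range := by
  induction t, ht using Set.Finite.induction_on with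
  | empty => exact ⟨Classical.arbitrary ι, Set.empty_subset _⟩
  | @insert x t _ _ ih =>
    obtain ⟨i, ht⟩ := ih
    obtain ⟨j, y, rfl⟩ := Ring.DirectLimit.exists_of x
    obtain ⟨k, hik, hjk⟩ := exists_ge_ge i j
    refine ⟨k, Set.insert_subset ⟨f j k hjk y, of_map f hjk y⟩ (ht.trans ?_)⟩
    rw [SetLike.coe_subset_coe, ← of_comp f hik]
    exact AlgHom.range_comp_le_range _ _

section Henselian

variable {I : Ideal A}

theorem exists_mem_of_mem_map {x : AlgDirectLimit f}
    (hx : x ∈ I.map (algebraMap A (AlgDirectLimit f))) :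
    ∃ i, ∃ y ∈ I.map (algebraMap A (G i)), of f i y = x := by
  induction hx using Submodule.span_induction with
  | mem x hx =>
    obtain ⟨a, ha, rfl⟩ := hx
    exact ⟨Classical.arbitrary ι, _, Ideal.mem_map_of_mem _ ha, rfl⟩
  | zero => exact ⟨Classical.arbitrary ι, 0, Ideal.zero_mem _, map_zero _⟩
  | add x y _ _ hx hy =>
    obtain ⟨i, x, hx, rfl⟩ := hx
    obtain ⟨j, y, hy, rfl⟩ := hy
    obtain ⟨k, hik, hjk⟩ := exists_ge_ge i j
    exact ⟨k, _, Ideal.add_mem _ (algHom_apply_mem_map_algebraMap (f i k hik) hx)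
      (algHom_apply_mem_map_algebraMap (f j k hjk) hy), by rw [map_add, of_map, of_map]⟩
  | smul c x _ hx =>
    obtain ⟨i, x, hx, rfl⟩ := hx
    obtain ⟨j, c, rfl⟩ := Ring.DirectLimit.exists_of c
    obtain ⟨k, hik, hjk⟩ := exists_ge_ge i j
    exact ⟨k, _, Ideal.mul_mem_left _ (f j k hjk c)
      (algHom_apply_mem_map_algebraMap (f i k hik) hx), by rw [map_mul, of_map, of_map]; rfl⟩

theorem map_le_jacobson (hG : ∀ i, I.map (algebraMap A (G i)) ≤ Ideal.jacobson ⊥) :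
    I.map (algebraMap A (AlgDirectLimit f)) ≤ Ideal.jacobson ⊥ := by
  intro x hx
  rw [Ideal.mem_jacobson_bot]
  intro y
  obtain ⟨i, x, hx', rfl⟩ := exists_mem_of_mem_map hx
  obtain ⟨j, y, rfl⟩ := Ring.DirectLimit.exists_of y
  obtain ⟨k, hik, hjk⟩ := exists_ge_ge i j
  have hunit := Ideal.mem_jacobson_bot.mp
    (hG k (algHom_apply_mem_map_algebraMap (f i k hik) hx')) (f j k hjk y)
  have := hunit.map (of f k)
  rw [map_add, map_mul, map_one, of_map, of_map] at this
  exact this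

variable [DirectedSystem G fun i j h ↦ (f i j h : G i → G j)]

theorem exists_map_eq_map {i : ι} {x y : G i} (h : of f i x = of f i y) :
    ∃ (j : ι) (hij : i ≤ j), f i j hij x = f i j hij y := by
  have : DirectedSystem G fun i j h ↦ ((f i j h : G i →+* G j) : G i → G j) :=
    ‹DirectedSystem G fun i j h ↦ (f i j h : G i → G j)›
  obtain ⟨j, hij, hj⟩ := Ring.DirectLimit.of.zero_exact (f' := fun i j h ↦ (f i j h : G i →+* G j))
    (show of f i (x - y) = 0 by rw [map_sub, h, sub_self])
  exact ⟨j, hij, sub_eq_zero.mp ((map_sub (f i j hij) x y).symm.trans hj)⟩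

theorem exists_map_mem_map {i : ι} {x : G i}
    (hx : of f i x ∈ I.map (algebraMap A (AlgDirectLimit f))) :
    ∃ (j : ι) (hij : i ≤ j), f i j hij x ∈ I.map (algebraMap A (G j)) := by
  obtain ⟨j, y, hy, hyx⟩ := exists_mem_of_mem_map hx
  obtain ⟨k, hik, hjk⟩ := exists_ge_ge i j
  rw [← of_map f hik, ← of_map f hjk] at hyx
  obtain ⟨l, hkl, hl⟩ := exists_map_eq_map hyx
  refine ⟨l, hik.trans hkl, ?_⟩
  rw [← DirectedSystem.map_map (f := fun i j h ↦ (f i j h : G i → G j)) hik hkl, ← hl]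
  exact algHom_apply_mem_map_algebraMap (f k l hkl)
    (algHom_apply_mem_map_algebraMap (f j k hjk) hy)

theorem exists_isUnit_map {i : ι} {x : G i} (hx : IsUnit (of f i x)) :
    ∃ (j : ι) (hij : i ≤ j), IsUnit (f i j hij x) := by
  obtain ⟨y, hxy⟩ := hx.exists_right_inv
  obtain ⟨j, y, rfl⟩ := Ring.DirectLimit.exists_of y
  obtain ⟨k, hik, hjk⟩ := exists_ge_ge i j
  have hk : of f k (f i k hik x * f j k hjk y) = of f k 1 := by
    rw [map_mul, of_map, of_map, map_one]
    exact hxy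
  obtain ⟨l, hkl, hl⟩ := exists_map_eq_map hk
  refine ⟨l, hik.trans hkl, .of_mul_eq_one (f k l hkl (f j k hjk y)) ?_⟩
  rw [← DirectedSystem.map_map (f := fun i j h ↦ (f i j h : G i → G j)) hik hkl, ← map_mul, hl,
    map_one]

theorem exists_isRoot_of_isUnit (hG : ∀ i, HenselianRing (G i) (I.map (algebraMap A (G i))))
    {F : (AlgDirectLimit f)[X]} (hF : F.Monic) {a : AlgDirectLimit f}
    (ha : F.eval a ∈ I.map (algebraMap A (AlgDirectLimit f)))
    (ha' : IsUnit (F.derivative.eval a)) :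
    ∃ b, F.IsRoot b ∧ b - a ∈ I.map (algebraMap A (AlgDirectLimit f)) := by
  obtain ⟨i, hi⟩ := exists_subset_range_of (F.coeffs.finite_toSet.insert a)
  obtain ⟨⟨a, (rfl : of f i a = _)⟩, hcoeffs⟩ := Set.insert_subset_iff.mp hi
  obtain ⟨F, rfl, -, hF⟩ := lifts_and_natDegree_eq_and_monic
    ((lifts_iff_coeffs_subset_range (f := (of f i : G i →+* AlgDirectLimit f)) F).mpr hcoeffs) hF
  have eval_of (p : (G i)[X]) :
      (p.map (of f i : G i →+* AlgDirectLimit f)).eval (of f i a) = of f i (p.eval a) :=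
    eval_map_apply _ _
  rw [derivative_map, eval_of] at ha'
  rw [eval_of] at ha
  obtain ⟨j, hij, hj⟩ := exists_map_mem_map ha
  obtain ⟨k, hjk, hk⟩ := exists_isUnit_map (x := f i j hij (F.derivative.eval a)) (by rwa [of_map])
  replace hj := algHom_apply_mem_map_algebraMap (f j k hjk) hj
  simp only [DirectedSystem.map_map (f := fun i j h ↦ (f i j h : G i → G j)) hij hjk] at hj hk
  let φ : G i →ₐ[A] G k := f i k (hij.trans hjk)
  have eval_φ (p : (G i)[X]) : (p.map (φ : G i →+* G k)).eval (φ a) = φ (p.eval a) :=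
    eval_map_apply _ _
  obtain ⟨b, hb, hba⟩ := (hG k).is_henselian (F.map (φ : G i →+* G k)) (hF.map _) (φ a)
    (by rwa [eval_φ]) (by rw [derivative_map, eval_φ]; exact hk.map _)
  refine ⟨of f k b, ?_, ?_⟩
  · rw [← of_comp f (hij.trans hjk), AlgHom.comp_toRingHom, ← Polynomial.map_map]
    exact hb.map
  · rw [← of_map f (hij.trans hjk), ← map_sub]
    exact algHom_apply_mem_map_algebraMap _ hba

theorem henselianRing (hG : ∀ i, HenselianRing (G i) (I.map (algebraMap A (G i)))) :
    HenselianRing (AlgDirectLimit f) (I.map (algebraMap A (AlgDirectLimit f))) where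
  jac := map_le_jacobson fun i ↦ (hG i).jac
  is_henselian _ hF _ ha ha' :=
    have := isLocalHom_of_le_jacobson_bot _ (map_le_jacobson (f := f) fun i ↦ (hG i).jac)
    exists_isRoot_of_isUnit hG hF ha (isUnit_of_map_unit _ _ ha')

end Henselian

section FinitePresentation

variable [DirectedSystem G fun i j h ↦ (f i j h : G i → G j)]

variable (f) in
/-- A directed system of algebras as a functor to the category of commutative rings. -/
def diagram : ι ⥤ CommRingCat.{u} where
  obj i := .of (G i)
  map hij := CommRingCat.ofHom (f _ _ hij.le)
  map_id i := by
    ext x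
    exact DirectedSystem.map_self (f := fun i j h ↦ (f i j h : G i → G j)) x
  map_comp hij hjk := by
    ext x
    exact (DirectedSystem.map_map (f := fun i j h ↦ (f i j h : G i → G j)) hij.le hjk.le x).symm

variable (f) in
/-- The direct limit as a cocone over `diagram f`. -/
noncomputable def cocone : Cocone (diagram f) where
  pt := .of (AlgDirectLimit f)
  ι :=
    { app i := CommRingCat.ofHom (of f i)
      naturality _ _ hij := by
        ext x
        exact of_map f hij.le x }

omit [IsDirectedOrder ι] [Nonempty ι] in
theorem cocone_app_map (s : Cocone (diagram f)) (i j : ι) (hij : i ≤ j) (x : G i) :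
    (s.ι.app j).hom (f i j hij x) = (s.ι.app i).hom x :=
  congr($(s.w (homOfLE hij)).hom x)

variable (f) in
/-- The direct limit is a colimit of `diagram f`. -/
noncomputable def isColimitCocone : IsColimit (cocone f) where
  desc s := CommRingCat.ofHom <| Ring.DirectLimit.lift G (fun i j h ↦ (f i j h : G i → G j)) s.pt
    (fun i ↦ (s.ι.app i).hom) (cocone_app_map s)
  fac s i := CommRingCat.hom_ext <| RingHom.ext <|
    Ring.DirectLimit.lift_of (f := fun i j h ↦ (f i j h : G i → G j)) s.pt
      (fun i ↦ (s.ι.app i).hom) (cocone_app_map s) i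
  uniq s _ hm := CommRingCat.hom_ext <| Ring.DirectLimit.hom_ext _ fun i ↦ RingHom.ext fun x ↦
    congr($(hm i).hom x).trans <|
      (Ring.DirectLimit.lift_of (f := fun i j h ↦ (f i j h : G i → G j)) s.pt
        (fun i ↦ (s.ι.app i).hom) (cocone_app_map s) i x).symm

variable {R : Type u} [CommRing R] [Algebra A R]

variable (f) in
/-- The structure maps of the algebras in a directed system, as a natural transformation. -/
def diagramAlgebraMap : (Functor.const ι).obj (CommRingCat.of A) ⟶ diagram f where
  app i := CommRingCat.ofHom (algebraMap A (G i))
  naturality _ _ hij := by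
    ext a
    exact ((f _ _ hij.le).commutes a).symm

theorem exists_of_comp_eq [Algebra.FinitePresentation A R] (u : R →ₐ[A] AlgDirectLimit f) :
    ∃ (i : ι) (g : R →ₐ[A] G i), (of f i).comp g = u := by
  obtain ⟨i, g, hg, hu⟩ := RingHom.EssFiniteType.exists_eq_comp_ι_app_of_isColimit (.of A)
    (diagram f) (diagramAlgebraMap f) (CommRingCat.ofHom (algebraMap A R)) (cocone f)
    (isColimitCocone f) (RingHom.finitePresentation_algebraMap.mpr ‹_›) (CommRingCat.ofHom u)
    fun i ↦ by
      ext a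
      exact (u.commutes a).trans ((of f i).commutes a).symm
  exact ⟨i, { g.hom with commutes' := fun a ↦ congr($(hg).hom a) },
    AlgHom.ext fun x ↦ congr($(hu).hom x).symm⟩

theorem exists_comp_eq_comp [Algebra.FiniteType A R] {i j : ι} {g : R →ₐ[A] G i} {h : R →ₐ[A] G j}
    (hgh : (of f i).comp g = (of f j).comp h) :
    ∃ (k : ι) (hik : i ≤ k) (hjk : j ≤ k), (f i k hik).comp g = (f j k hjk).comp h := by
  obtain ⟨k, hik, hjk, hk⟩ := RingHom.EssFiniteType.exists_comp_map_eq_of_isColimit (.of A)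
    (diagram f) (diagramAlgebraMap f) (CommRingCat.ofHom (algebraMap A R)) (cocone f)
    (isColimitCocone f) (RingHom.finiteType_algebraMap.mpr ‹_›).essFiniteType
    (CommRingCat.ofHom (g : R →+* G i)) (by ext a; exact g.commutes a)
    (CommRingCat.ofHom (h : R →+* G j)) (by ext a; exact h.commutes a)
    (by ext x; exact DFunLike.congr_fun hgh x)
  exact ⟨k, hik.le, hjk.le, AlgHom.ext fun x ↦ congr($(hk).hom x)⟩

end FinitePresentation

end AlgDirectLimit

end AlgDirectLimit

/-! ### The functorial criterion -/

section Forward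

variable {A B ι : Type u} [CommRing A] [CommRing B] [Algebra A B] {I : Ideal A} [Preorder ι]
  [IsDirectedOrder ι] [Nonempty ι] {G : ι → Type u} [∀ i, CommRing (G i)] [∀ i, Algebra A (G i)]
  {f : ∀ i j, i ≤ j → G i →ₐ[A] G j} [DirectedSystem G fun i j h ↦ (f i j h : G i → G j)]

theorem IsHfp.exists_of_comp_eq (hB : IsHfp (algebraMap A B) I)
    (hG : ∀ i, HenselianRing (G i) (I.map (algebraMap A (G i)))) (u : B →ₐ[A] AlgDirectLimit f) :
    ∃ (i : ι) (g : B →ₐ[A] G i), (AlgDirectLimit.of f i).comp g = u := by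
  obtain ⟨-, R, _, _, ρ, hR, hρ⟩ := isHfp_algebraMap_iff.mp hB
  obtain ⟨i, g₀, hg₀⟩ := AlgDirectLimit.exists_of_comp_eq (u.comp ρ)
  obtain ⟨g, rfl⟩ := hρ.exists_comp_eq (hG i) g₀
  exact ⟨i, g, hρ.algHom_ext (AlgDirectLimit.henselianRing hG) hg₀⟩

theorem IsHfp.exists_comp_eq_comp (hB : IsHfp (algebraMap A B) I)
    (hG : ∀ i, HenselianRing (G i) (I.map (algebraMap A (G i)))) {i j : ι} {g : B →ₐ[A] G i}
    {h : B →ₐ[A] G j} (hgh : (AlgDirectLimit.of f i).comp g = (AlgDirectLimit.of f j).comp h) :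
    ∃ (k : ι) (hik : i ≤ k) (hjk : j ≤ k), (f i k hik).comp g = (f j k hjk).comp h := by
  obtain ⟨-, R, _, _, ρ, hR, hρ⟩ := isHfp_algebraMap_iff.mp hB
  obtain ⟨k, hik, hjk, hk⟩ := AlgDirectLimit.exists_comp_eq_comp (f := f) (g := g.comp ρ)
    (h := h.comp ρ) congr(($hgh).comp ρ)
  exact ⟨k, hik, hjk, hρ.algHom_ext (hG k) hk⟩

end Forward

/-- A finite approximation of the `A`-algebra `B` by generators and relations: finitely many
elements of `B` and a finitely generated ideal of polynomial relations that they satisfy. -/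
structure FinitePresentationOver (A B : Type u) [CommRing A] [CommRing B] [Algebra A B] where
  /-- The generators, used as the variables of the presentation. -/
  vars : Finset B
  /-- The relations. -/
  rels : Ideal (MvPolynomial vars A)
  fg_rels : rels.FG
  rels_le_ker : rels ≤ RingHom.ker (MvPolynomial.aeval (R := A) ((↑) : vars → B))

namespace FinitePresentationOver

variable {A B : Type u} [CommRing A] [CommRing B] [Algebra A B]

noncomputable instance : Preorder (FinitePresentationOver A B) where
  le i j := ∃ h : i.vars ⊆ j.vars,
    i.rels.map (MvPolynomial.rename (R := A) (Set.inclusion h)) ≤ j.rels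
  le_refl i := ⟨le_rfl, Ideal.map_le_iff_le_comap.mpr fun p hp ↦
    Ideal.mem_comap.mpr ((MvPolynomial.rename_id_apply p).symm ▸ hp)⟩
  le_trans i j k := by
    rintro ⟨hij, hij'⟩ ⟨hjk, hjk'⟩
    refine ⟨hij.trans hjk, ?_⟩
    rw [Ideal.map_le_iff_le_comap] at *
    intro p hp
    have := hjk' (hij' hp)
    rw [Ideal.mem_comap, MvPolynomial.rename_rename] at this
    exact this

/-- The finitely presented algebra with the given generators and relations. -/
abbrev Ring (i : FinitePresentationOver A B) : Type u :=
  MvPolynomial i.vars A ⧸ i.rels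

instance (i : FinitePresentationOver A B) : Algebra.FinitePresentation A i.Ring :=
  .quotient i.fg_rels

/-- The class of a generator. -/
noncomputable def gen (i : FinitePresentationOver A B) (x : i.vars) : i.Ring :=
  Ideal.Quotient.mk i.rels (.X x)

theorem algHom_ext {C : Type*} [CommRing C] [Algebra A C] {i : FinitePresentationOver A B}
    {g h : i.Ring →ₐ[A] C} (hgh : ∀ x, g (i.gen x) = h (i.gen x)) : g = h :=
  Ideal.Quotient.algHom_ext A (MvPolynomial.algHom_ext hgh)

/-- The transition maps, which send generators to themselves. -/
noncomputable def map {i j : FinitePresentationOver A B} (hij : i ≤ j) : i.Ring →ₐ[A] j.Ring :=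
  Ideal.quotientMapₐ j.rels (MvPolynomial.rename (Set.inclusion hij.1))
    (Ideal.map_le_iff_le_comap.mp hij.2)

theorem map_gen {i j : FinitePresentationOver A B} (hij : i ≤ j) (x : i.vars) :
    map hij (i.gen x) = j.gen (Set.inclusion hij.1 x) :=
  congrArg (Ideal.Quotient.mk j.rels) (MvPolynomial.rename_X ..)

/-- The canonical map to `B`. -/
noncomputable def eval (i : FinitePresentationOver A B) : i.Ring →ₐ[A] B :=
  Ideal.Quotient.liftₐ i.rels (MvPolynomial.aeval (↑)) i.rels_le_ker

theorem eval_gen (i : FinitePresentationOver A B) (x : i.vars) : i.eval (i.gen x) = x :=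
  MvPolynomial.aeval_X ..

theorem map_refl (i : FinitePresentationOver A B) : map (le_refl i) = AlgHom.id A i.Ring :=
  algHom_ext fun x ↦ map_gen _ x

theorem map_comp_map {i j k : FinitePresentationOver A B} (hij : i ≤ j) (hjk : j ≤ k) :
    (map hjk).comp (map hij) = map (hij.trans hjk) :=
  algHom_ext fun x ↦ by simp only [AlgHom.comp_apply, map_gen]

theorem eval_comp_map {i j : FinitePresentationOver A B} (hij : i ≤ j) :
    j.eval.comp (map hij) = i.eval :=
  algHom_ext fun x ↦ by simp only [AlgHom.comp_apply, map_gen, eval_gen]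

instance : DirectedSystem (Ring (A := A) (B := B)) fun _ _ hij ↦ map hij where
  map_self i := DFunLike.congr_fun (map_refl i)
  map_map _ _ _ hij hjk := DFunLike.congr_fun (map_comp_map hij hjk)

instance : IsDirectedOrder (FinitePresentationOver A B) where
  directed i j := by
    classical
    have hi : i.vars ⊆ i.vars ∪ j.vars := Finset.subset_union_left
    have hj : j.vars ⊆ i.vars ∪ j.vars := Finset.subset_union_right
    refine ⟨⟨i.vars ∪ j.vars, i.rels.map (MvPolynomial.rename (R := A) (Set.inclusion hi)) ⊔
      j.rels.map (MvPolynomial.rename (R := A) (Set.inclusion hj)),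
      Submodule.FG.sup (i.fg_rels.map _) (j.fg_rels.map _), sup_le ?_ ?_⟩,
      ⟨hi, le_sup_left⟩, ⟨hj, le_sup_right⟩⟩
    · exact Ideal.map_le_iff_le_comap.mpr fun p hp ↦
        (MvPolynomial.aeval_rename (R := A) ..).trans (i.rels_le_ker hp)
    · exact Ideal.map_le_iff_le_comap.mpr fun p hp ↦
        (MvPolynomial.aeval_rename (R := A) ..).trans (j.rels_le_ker hp)

/-- The presentation with a single generator and no relations. -/
noncomputable def single (x : B) : FinitePresentationOver A B where
  vars := {x}
  rels := ⊥
  fg_rels := Submodule.fg_bot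
  rels_le_ker := bot_le

theorem single_le {x : B} {i : FinitePresentationOver A B} (hx : x ∈ i.vars) : single x ≤ i :=
  ⟨Finset.singleton_subset_iff.mpr hx, Ideal.map_bot.trans_le bot_le⟩

/-- The class of the generator `x` in `(single x).Ring`. -/
noncomputable def singleGen (x : B) : (single x : FinitePresentationOver A B).Ring :=
  (single x).gen ⟨x, Finset.mem_singleton_self x⟩

theorem eval_singleGen (x : B) :
    (single x : FinitePresentationOver A B).eval (singleGen x) = x :=
  eval_gen ..

instance : Nonempty (FinitePresentationOver A B) := ⟨single 0⟩

/-- The presentation with a single relation. -/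
noncomputable def singleRel {s : Finset B} (p : MvPolynomial s A)
    (hp : MvPolynomial.aeval ((↑) : s → B) p = 0) :
    FinitePresentationOver A B where
  vars := s
  rels := Ideal.span {p}
  fg_rels := Submodule.fg_span_singleton p
  rels_le_ker := (Ideal.span_singleton_le_iff_mem _).mpr hp

-- Every relation between elements of `B` involves only finitely many of them, so it already holds
-- in one of the algebras: `B` is the colimit of its finite presentations.
theorem exists_algHom {L : Type*} [CommRing L] [Algebra A L]
    (g : ∀ i : FinitePresentationOver A B, i.Ring →ₐ[A] L)
    (hg : ∀ i j (hij : i ≤ j), (g j).comp (map hij) = g i) :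
    ∃ u : B →ₐ[A] L, ∀ i, u.comp i.eval = g i := by
  let val (x : B) : L := g (single x) (singleGen x)
  have hval (i : FinitePresentationOver A B) (x : i.vars) : g i (i.gen x) = val x := by
    have := DFunLike.congr_fun (hg _ _ (single_le x.2)) (singleGen x.1)
    rwa [AlgHom.comp_apply, singleGen, map_gen] at this
  have haeval (i : FinitePresentationOver A B) (p : MvPolynomial i.vars A) :
      MvPolynomial.aeval (val ∘ Subtype.val) p = g i (Ideal.Quotient.mk i.rels p) := by
    suffices MvPolynomial.aeval (val ∘ Subtype.val) = (g i).comp (Ideal.Quotient.mkₐ A i.rels) from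
      DFunLike.congr_fun this p
    exact MvPolynomial.algHom_ext fun x ↦ (MvPolynomial.aeval_X ..).trans (hval i x).symm
  have hker : ∀ p : MvPolynomial B A, MvPolynomial.aeval id p = 0 →
      MvPolynomial.aeval val p = 0 := by
    intro p hp
    obtain ⟨s, p, rfl⟩ := p.exists_finset_rename
    rw [MvPolynomial.aeval_rename] at hp ⊢
    have hp0 : Ideal.Quotient.mk (singleRel p hp).rels p = 0 :=
      Ideal.Quotient.eq_zero_iff_mem.mpr (Ideal.mem_span_singleton_self p)
    exact (haeval (singleRel p hp) p).trans ((congrArg _ hp0).trans (map_zero _))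
  have hsurj : Function.Surjective (MvPolynomial.aeval (R := A) (id : B → B)) :=
    fun x ↦ ⟨.X x, MvPolynomial.aeval_X ..⟩
  refine ⟨AlgHom.liftOfSurjective _ hsurj _ hker, fun i ↦ algHom_ext fun x ↦ ?_⟩
  have hx := AlgHom.liftOfSurjective_apply _ hsurj _ hker (.X x.1)
  rw [MvPolynomial.aeval_X, MvPolynomial.aeval_X] at hx
  rw [AlgHom.comp_apply, eval_gen, hval]
  exact hx

theorem algHom_ext_of_comp_eval {C : Type*} [CommRing C] [Algebra A C] {u v : B →ₐ[A] C}
    (huv : ∀ i : FinitePresentationOver A B, u.comp i.eval = v.comp i.eval) : u = v :=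
  AlgHom.ext fun x ↦ by
    simpa only [AlgHom.comp_apply, eval_singleGen] using
      DFunLike.congr_fun (huv (single x)) (singleGen x)

end FinitePresentationOver

theorem IsHenselEquiv.exists_directedSystem {A ι : Type u} [CommRing A] {I : Ideal A} [Preorder ι]
    {R H : ι → Type u} [∀ i, CommRing (R i)] [∀ i, Algebra A (R i)] [∀ i, CommRing (H i)]
    [∀ i, Algebra A (H i)] (r : ∀ i j, i ≤ j → R i →ₐ[A] R j)
    [DirectedSystem R fun i j h ↦ (r i j h : R i → R j)] {ρ : ∀ i, R i →ₐ[A] H i}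
    (hρ : ∀ i, IsHenselEquiv I (ρ i))
    (hH : ∀ i, HenselianRing (H i) (I.map (algebraMap A (H i)))) :
    ∃ f : ∀ i j, i ≤ j → H i →ₐ[A] H j, DirectedSystem H (fun i j h ↦ (f i j h : H i → H j)) ∧
      ∀ i j hij, (f i j hij).comp (ρ i) = (ρ j).comp (r i j hij) := by
  choose f hf using fun i j (hij : i ≤ j) ↦ (hρ i).exists_comp_eq (hH j) ((ρ j).comp (r i j hij))
  have r_self (i : ι) : r i i le_rfl = AlgHom.id A (R i) :=
    AlgHom.ext fun x ↦ DirectedSystem.map_self (f := fun i j h ↦ (r i j h : R i → R j)) x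
  have r_comp {i j k : ι} (hij : i ≤ j) (hjk : j ≤ k) :
      (r j k hjk).comp (r i j hij) = r i k (hij.trans hjk) :=
    AlgHom.ext <| DirectedSystem.map_map (f := fun i j h ↦ (r i j h : R i → R j)) hij hjk
  have f_self (i : ι) : f i i le_rfl = AlgHom.id A (H i) :=
    (hρ i).algHom_ext (hH i) (by rw [hf, r_self, AlgHom.comp_id, AlgHom.id_comp])
  have f_comp {i j k : ι} (hij : i ≤ j) (hjk : j ≤ k) :
      (f j k hjk).comp (f i j hij) = f i k (hij.trans hjk) :=
    (hρ i).algHom_ext (hH k) (by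
      rw [AlgHom.comp_assoc, hf, ← AlgHom.comp_assoc, hf, AlgHom.comp_assoc, r_comp, hf])
  exact ⟨f, ⟨fun i ↦ DFunLike.congr_fun (f_self i),
    fun _ _ _ hij hjk ↦ DFunLike.congr_fun (f_comp hij hjk)⟩, hf⟩

-- Henselizing the finite presentations of `B` gives a system whose limit has `B` as a retract, and
-- the hypothesis makes `B` a retract of a single term of this system.
theorem isHfp_of_forall_exists_of_comp_eq {A B : Type u} [CommRing A] [CommRing B] [Algebra A B]
    {I : Ideal A} (hB : HenselianRing B (I.map (algebraMap A B)))
    (h : ∀ (ι : Type u) [Preorder ι] [IsDirectedOrder ι] [Nonempty ι] (G : ι → Type u)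
      [∀ i, CommRing (G i)] [∀ i, Algebra A (G i)] (f : ∀ i j, i ≤ j → G i →ₐ[A] G j)
      [DirectedSystem G fun i j h ↦ (f i j h : G i → G j)],
      (∀ i, HenselianRing (G i) (I.map (algebraMap A (G i)))) →
        ∀ u : B →ₐ[A] AlgDirectLimit f, ∃ (i : ι) (g : B →ₐ[A] G i),
          (AlgDirectLimit.of f i).comp g = u) :
    IsHfp (algebraMap A B) I := by
  let H (i : FinitePresentationOver A B) := Henselization (I.map (algebraMap A i.Ring))
  let ρ (i : FinitePresentationOver A B) : i.Ring →ₐ[A] H i := IsScalarTower.toAlgHom A i.Ring (H i)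
  have hρ i : IsHenselEquiv I (ρ i) := Henselization.isHenselEquiv_toAlgHom I
  have hH i : HenselianRing (H i) (I.map (algebraMap A (H i))) :=
    Henselization.henselianRing_map_algebraMap I
  obtain ⟨f, _, hf⟩ := IsHenselEquiv.exists_directedSystem
    (fun i j ↦ FinitePresentationOver.map (A := A) (B := B) (i := i) (j := j)) hρ hH
  choose π hπ using fun i ↦ (hρ i).exists_comp_eq hB i.eval
  have hπf i j (hij : i ≤ j) : (π j).comp (f i j hij) = π i := (hρ i).algHom_ext hB (by
    rw [AlgHom.comp_assoc, hf, ← AlgHom.comp_assoc, hπ, hπ,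
      FinitePresentationOver.eval_comp_map])
  let π' : AlgDirectLimit f →ₐ[A] B := AlgDirectLimit.lift π hπf
  obtain ⟨u, hu⟩ := FinitePresentationOver.exists_algHom
    (fun i ↦ (AlgDirectLimit.of f i).comp (ρ i)) fun i j hij ↦ by
      rw [AlgHom.comp_assoc, ← hf, ← AlgHom.comp_assoc, AlgDirectLimit.of_comp]
  have hπu : π'.comp u = AlgHom.id A B :=
    FinitePresentationOver.algHom_ext_of_comp_eval fun i ↦ by
      rw [AlgHom.comp_assoc, hu, ← AlgHom.comp_assoc, AlgDirectLimit.lift_comp_of, hπ,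
        AlgHom.id_comp]
  obtain ⟨i, s, rfl⟩ := h _ H f hH u
  rw [← AlgHom.comp_assoc, AlgDirectLimit.lift_comp_of] at hπu
  exact .of_retract (isHfp_algebraMap_iff.mpr ⟨hH i, i.Ring, _, _, ρ i, inferInstance, hρ i⟩) hB
    (π i) s hπu

theorem isHfp_iff_functorial_general
    {A B : Type u} [CommRing A] [CommRing B] [Algebra A B]
    (I : Ideal A) [HenselianRing B (I.map (algebraMap A B))] :
    IsHfp (algebraMap A B) I ↔
      ∀ (ι : Type u) (_ : Preorder ι), IsDirected ι (· ≤ ·) → Nonempty ι →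
        ∀ (G : ι → Type u) (_ : ∀ i, CommRing (G i)) (_ : ∀ i, Algebra A (G i))
          (f : ∀ i j, i ≤ j → G i →ₐ[A] G j),
          DirectedSystem G (fun i j h => (f i j h : G i → G j)) →
          (∀ i, HenselianRing (G i) (I.map (algebraMap A (G i)))) →
          ((∀ u : B →+* Ring.DirectLimit G (fun i j h => (f i j h : G i → G j)),
              (∀ i, u.comp (algebraMap A B) =
                (Ring.DirectLimit.of G (fun i j h => (f i j h : G i → G j)) i).comp
                  (algebraMap A (G i))) →
              ∃ i, ∃ g : B →ₐ[A] G i,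
                (Ring.DirectLimit.of G (fun i j h => (f i j h : G i → G j)) i).comp
                  g.toRingHom = u) ∧
            ∀ (i j : ι) (g : B →ₐ[A] G i) (h : B →ₐ[A] G j),
              (Ring.DirectLimit.of G (fun i j h => (f i j h : G i → G j)) i).comp g.toRingHom =
                (Ring.DirectLimit.of G (fun i j h => (f i j h : G i → G j)) j).comp
                  h.toRingHom →
              ∃ (k : ι) (hik : i ≤ k) (hjk : j ≤ k),
                (f i k hik).comp g = (f j k hjk).comp h) := by
  constructor
  · intro hB ι _ _ _ G _ _ f _ hG
    refine ⟨fun u hu ↦ ?_, fun i j g h hgh ↦ ?_⟩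
    · obtain ⟨i, g, hg⟩ := hB.exists_of_comp_eq hG
        { u with commutes' := RingHom.congr_fun (hu (Classical.arbitrary ι)) }
      exact ⟨i, g, congrArg AlgHom.toRingHom hg⟩
    · exact hB.exists_comp_eq_comp hG (AlgHom.ext (RingHom.congr_fun hgh))
  · intro h
    refine isHfp_of_forall_exists_of_comp_eq ‹_› fun ι _ _ _ G _ _ f _ hG u ↦ ?_
    obtain ⟨i, g, hg⟩ := (h ι _ ‹_› ‹_› G _ _ f ‹_› hG).1 u fun i ↦
      u.comp_algebraMap.trans (AlgDirectLimit.of f i).comp_algebraMap.symm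
    exact ⟨i, g, AlgHom.ext (RingHom.congr_fun hg)⟩

/-- Grothendieck-style functorial criterion for hfp maps: `B` is hfp over a Henselian pair
`(A, I)` iff for every nonempty directed system of `A`-algebras which are Henselian along `I`,
the map `colim Hom_A(B, R_i) → Hom_A(B, colim R_i)` is bijective. -/
theorem isHfp_iff_functorial
    {A B : Type u} [CommRing A] [CommRing B] [Algebra A B]
    (I : Ideal A) [HenselianRing A I]
    [HenselianRing B (I.map (algebraMap A B))] :
    IsHfp (algebraMap A B) I ↔
      ∀ (ι : Type u) (_ : Preorder ι), IsDirected ι (· ≤ ·) → Nonempty ι →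
        ∀ (G : ι → Type u) (_ : ∀ i, CommRing (G i)) (_ : ∀ i, Algebra A (G i))
          (f : ∀ i j, i ≤ j → G i →ₐ[A] G j),
          DirectedSystem G (fun i j h => (f i j h : G i → G j)) →
          (∀ i, HenselianRing (G i) (I.map (algebraMap A (G i)))) →
          ((∀ u : B →+* Ring.DirectLimit G (fun i j h => (f i j h : G i → G j)),
              (∀ i, u.comp (algebraMap A B) =
                (Ring.DirectLimit.of G (fun i j h => (f i j h : G i → G j)) i).comp
                  (algebraMap A (G i))) →
              ∃ i, ∃ g : B →ₐ[A] G i,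
                (Ring.DirectLimit.of G (fun i j h => (f i j h : G i → G j)) i).comp
                  g.toRingHom = u) ∧
            ∀ (i j : ι) (g : B →ₐ[A] G i) (h : B →ₐ[A] G j),
              (Ring.DirectLimit.of G (fun i j h => (f i j h : G i → G j)) i).comp g.toRingHom =
                (Ring.DirectLimit.of G (fun i j h => (f i j h : G i → G j)) j).comp
                  h.toRingHom →
              ∃ (k : ι) (hik : i ≤ k) (hjk : j ≤ k),
                (f i k hik).comp g = (f j k hjk).comp h) := by
  exact isHfp_iff_functorial_general I
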